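/- arXiv:1504.04250 — 2 statements merged into one kernel-verified Lean document; each statement's English description precedes it below -/
import Mathlib

section
/- Let Y be a real Banach space with property (β), let k ≥ 1 be an integer, let D ≥ 1, and suppose there exists a bi-Lipschitz embedding of T^ω_{2^k} into Y with distortion at most D. Then c_Y(T^ω_{2^{k−1}}) ≤ D·(1 − β̄_Y(2/D)). -/
open Set Function Filter

open scoped ENNReal

attribute [local instance] Classical.propDecidable

noncomputable section

def LipUB {α β : Type*} (dα : α → α → ℝ) (dβ : β → β → ℝ) (f : α → β) (L : ℝ) : Prop :=
  ∀ a b : α, dβ (f a) (f b) ≤ L * dα a b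

def CoLipUB {α β : Type*} (dα : α → α → ℝ) (dβ : β → β → ℝ) (f : α → β) (C : ℝ) : Prop :=
  ∀ a b : α, dα a b ≤ C * dβ (f a) (f b)

def IsBiLipEmb {α β : Type*} (dα : α → α → ℝ) (dβ : β → β → ℝ) (f : α → β) : Prop :=
  Function.Injective f ∧ ∃ L C : ℝ, LipUB dα dβ f L ∧ CoLipUB dα dβ f C

def distortionSet (α β : Type*) (dα : α → α → ℝ) (dβ : β → β → ℝ) : Set ℝ :=
  {D | ∃ f : α → β, Function.Injective f ∧ ∃ L C : ℝ,
    LipUB dα dβ f L ∧ CoLipUB dα dβ f C ∧ D = L * C}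

def cDist (α β : Type*) (dα : α → α → ℝ) (dβ : β → β → ℝ) : ℝ≥0∞ :=
  ⨅ D ∈ distortionSet α β dα dβ, ENNReal.ofReal D
def rolewiczSet (Y : Type*) [SeminormedAddCommGroup Y] (t : ℝ) : Set ℝ :=
  {s | ∃ x : Y, ‖x‖ ≤ 1 ∧ ∃ y : ℕ → Y, (∀ i, ‖y i‖ ≤ 1) ∧
    (∀ n m : ℕ, n ≠ m → t ≤ ‖y n - y m‖) ∧ s = ⨅ i, ‖x - y i‖ / 2}

def rolewiczMod (Y : Type*) [SeminormedAddCommGroup Y] (t : ℝ) : ℝ :=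
  1 - sSup (rolewiczSet Y t)

def HasBeta (Y : Type*) [SeminormedAddCommGroup Y] : Prop :=
  ∀ t : ℝ, 0 < t → t ≤ 2 → 0 < rolewiczMod Y t

def HasBetaP (Y : Type*) [SeminormedAddCommGroup Y] (p γ : ℝ) : Prop :=
  ∀ t : ℝ, 0 < t → t ≤ 2 → (rolewiczSet Y t).Nonempty → γ * t ^ p ≤ rolewiczMod Y t
def lcpLen : List ℕ → List ℕ → ℕ
  | a :: x, b :: y => if a = b then lcpLen x y + 1 else 0
  | _, _ => 0

def treeDist (x y : List ℕ) : ℝ :=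
  (x.length : ℝ) + (y.length : ℝ) - 2 * (lcpLen x y : ℝ)

def TreeOmega (h : ℕ) : Type := {x : List ℕ // x.length ≤ h}

def tDist (h : ℕ) : TreeOmega h → TreeOmega h → ℝ := fun x y => treeDist x.1 y.1

/-!
Halve the height of the tree by doubling its edges: send a word `n₁ ⋯ n_j` to
`n₁ i₁ ⋯ n_j i_j`, where each letter `i` may be chosen depending on what precedes it. Whatever the
choices, distances are exactly doubled. Now let `f` be `L`-Lipschitz with `C`-Lipschitz inverse and
`L * C ≤ D`. For every vertex `p` and every child `p n`, the point `f p` and the images of all the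
grandchildren `p n i` lie in the ball of radius `L` around `f (p n)`, and the images of the
grandchildren are `2 * L / D`-separated. Hence some grandchild is mapped within `2 * L * r` of `f p`
as soon as `1 - β̄ (2 / D) < r`. With these choices, `f` composed with the doubling has Lipschitz
constant `2 * L * r` and its inverse has Lipschitz constant `C / 2`, so its distortion is at most
`D * r`; let `r` decrease to `1 - β̄ (2 / D)`.
-/

namespace CoLipUB

variable {α β : Type*} [PseudoMetricSpace β] {dα : α → α → ℝ} {f : α → β} {C : ℝ}

theorem injective (hf : CoLipUB dα dist f C) (hα : ∀ a b, dα a b ≤ 0 → a = b) : Injective f := by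
  intro a b hab
  apply hα
  simpa [hab] using hf a b

theorem dist_pos_and_pos (hf : CoLipUB dα dist f C) {a b : α} (hab : 0 < dα a b) :
    0 < dist (f a) (f b) ∧ 0 < C := by
  have hmul : 0 < C * dist (f a) (f b) := hab.trans_le (hf a b)
  have hC : 0 < C := pos_of_mul_pos_left hmul dist_nonneg
  exact ⟨pos_of_mul_pos_right hmul hC.le, hC⟩

theorem mul_div_le_dist (hf : CoLipUB dα dist f C) {L D : ℝ} (hL : 0 ≤ L) (hD : 0 < D)
    (hLC : L * C ≤ D) (a b : α) : L * (dα a b / D) ≤ dist (f a) (f b) := by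
  rw [← mul_div_assoc, div_le_iff₀' hD]
  calc L * dα a b ≤ L * (C * dist (f a) (f b)) := by gcongr; exact hf a b
    _ = L * C * dist (f a) (f b) := (mul_assoc _ _ _).symm
    _ ≤ D * dist (f a) (f b) := by gcongr

end CoLipUB

theorem cDist_le_of_lipUB_of_coLipUB {α β : Type*} {dα : α → α → ℝ} {dβ : β → β → ℝ} {f : α → β}
    {L C : ℝ} (hinj : Injective f) (hLip : LipUB dα dβ f L) (hCo : CoLipUB dα dβ f C) :
    cDist α β dα dβ ≤ ENNReal.ofReal (L * C) :=
  iInf₂_le _ ⟨f, hinj, L, C, hLip, hCo, rfl⟩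

theorem lcpLen_append (p a b : List ℕ) : lcpLen (p ++ a) (p ++ b) = p.length + lcpLen a b := by
  induction p with
  | nil => simp
  | cons c p ih =>
    simp only [List.cons_append, lcpLen, if_true, ih, List.length_cons]
    omega

theorem treeDist_append (p a b : List ℕ) : treeDist (p ++ a) (p ++ b) = treeDist a b := by
  simp only [treeDist, lcpLen_append, List.length_append]
  push_cast
  ring

theorem exists_eq_append_treeDist_eq (x y : List ℕ) :
    ∃ p a b, x = p ++ a ∧ y = p ++ b ∧ treeDist x y = a.length + b.length := by
  induction x generalizing y with
  | nil => exact ⟨[], [], y, by simp [treeDist, lcpLen]⟩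
  | cons n x ih =>
    cases y with
    | nil => exact ⟨[], n :: x, [], by simp [treeDist, lcpLen]⟩
    | cons m y =>
      by_cases hnm : n = m
      · subst hnm
        obtain ⟨p, a, b, rfl, rfl, hdist⟩ := ih y
        exact ⟨n :: p, a, b, rfl, rfl, (treeDist_append [n] _ _).trans hdist⟩
      · exact ⟨[], n :: x, m :: y, by simp [treeDist, lcpLen, hnm]⟩

theorem eq_of_treeDist_nonpos {x y : List ℕ} (hxy : treeDist x y ≤ 0) : x = y := by
  obtain ⟨p, a, b, rfl, rfl, hdist⟩ := exists_eq_append_treeDist_eq x y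
  rw [hdist] at hxy
  have hlen : a.length + b.length = 0 := Nat.le_zero.1 (by exact_mod_cast hxy)
  obtain ⟨ha, hb⟩ := Nat.add_eq_zero_iff.1 hlen
  rw [List.length_eq_zero_iff.1 ha, List.length_eq_zero_iff.1 hb]

theorem treeDist_child (x : List ℕ) (n : ℕ) : treeDist x (x ++ [n]) = 1 := by
  simpa [treeDist, lcpLen] using treeDist_append x [] [n]

theorem treeDist_grandchild_child (x : List ℕ) (n i : ℕ) :
    treeDist (x ++ [n, i]) (x ++ [n]) = 1 := by
  rw [treeDist_append]
  norm_num [treeDist, lcpLen]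

theorem treeDist_siblings (x : List ℕ) {i j : ℕ} (hij : i ≠ j) :
    treeDist (x ++ [i]) (x ++ [j]) = 2 := by
  rw [treeDist_append]
  norm_num [treeDist, lcpLen, hij]

theorem pos_of_lipUB_of_coLipUB {Y : Type*} [PseudoMetricSpace Y] {N : ℕ} (hN : 0 < N)
    {f : TreeOmega N → Y} {L C : ℝ} (hLip : LipUB (tDist N) dist f L)
    (hCo : CoLipUB (tDist N) dist f C) : 0 < L ∧ 0 < C := by
  let root : TreeOmega N := ⟨[], N.zero_le⟩
  let child : TreeOmega N := ⟨[0], hN⟩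
  have hedge : tDist N root child = 1 := treeDist_child [] 0
  obtain ⟨hdist, hC⟩ := hCo.dist_pos_and_pos (hedge ▸ one_pos)
  have hle := hLip root child
  rw [hedge, mul_one] at hle
  exact ⟨hdist.trans_le hle, hC⟩

section Edges

variable {Y : Type*} [PseudoMetricSpace Y] {h : ℕ} {f : TreeOmega h → Y} {K : ℝ}

theorem dist_le_mul_length_of_edges
    (hf : ∀ (x y : TreeOmega h) (n : ℕ), y.1 = x.1 ++ [n] → dist (f x) (f y) ≤ K)
    (x y : TreeOmega h) (a : List ℕ) (hy : y.1 = x.1 ++ a) :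
    dist (f x) (f y) ≤ K * a.length := by
  induction a using List.reverseRecOn generalizing y with
  | nil =>
    obtain rfl : y = x := Subtype.ext (by simpa using hy)
    simp
  | append_singleton a n ih =>
    have hlen : (x.1 ++ a).length ≤ h := by
      have := y.2
      simp only [hy, List.length_append, List.length_singleton] at this ⊢
      omega
    let z : TreeOmega h := ⟨x.1 ++ a, hlen⟩
    calc dist (f x) (f y) ≤ dist (f x) (f z) + dist (f z) (f y) := dist_triangle _ _ _
      _ ≤ K * a.length + K :=
        add_le_add (ih z rfl) (hf z y n (by rw [hy, List.append_assoc]))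
      _ = K * (a ++ [n]).length := by
        rw [List.length_append, List.length_singleton]
        push_cast
        ring

theorem lipUB_of_edges
    (hf : ∀ (x y : TreeOmega h) (n : ℕ), y.1 = x.1 ++ [n] → dist (f x) (f y) ≤ K) :
    LipUB (tDist h) dist f K := by
  intro x y
  obtain ⟨p, a, b, hx, hy, hdist⟩ := exists_eq_append_treeDist_eq x.1 y.1
  have hp : p.length ≤ h := by
    have := x.2
    rw [hx, List.length_append] at this
    omega
  let z : TreeOmega h := ⟨p, hp⟩
  calc dist (f x) (f y) ≤ dist (f z) (f x) + dist (f z) (f y) := dist_triangle_left _ _ _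
    _ ≤ K * a.length + K * b.length :=
      add_le_add (dist_le_mul_length_of_edges hf z x a hx) (dist_le_mul_length_of_edges hf z y b hy)
    _ = K * tDist h x y := by rw [tDist, hdist, mul_add]

end Edges

/-- The word `n₁ i₁ ⋯ n_j i_j` obtained from `n₁ ⋯ n_j` by inserting after each letter `n` the
letter `c q n`, where `q` is the part of the new word that precedes `n`. In the recursive step the
selector `c` is shifted so that it still sees the whole of `q`. -/
def doubleWord : (List ℕ → ℕ → ℕ) → List ℕ → List ℕ
  | _, [] => []
  | c, n :: x => n :: c [] n :: doubleWord (fun q => c (n :: c [] n :: q)) x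

theorem length_doubleWord (c : List ℕ → ℕ → ℕ) (x : List ℕ) :
    (doubleWord c x).length = 2 * x.length := by
  induction x generalizing c with
  | nil => rfl
  | cons n x ih =>
    simp only [doubleWord, List.length_cons, ih]
    ring

theorem lcpLen_doubleWord (c : List ℕ → ℕ → ℕ) (x y : List ℕ) :
    lcpLen (doubleWord c x) (doubleWord c y) = 2 * lcpLen x y := by
  induction x generalizing c y with
  | nil => simp [doubleWord, lcpLen]
  | cons n x ih =>
    cases y with
    | nil => simp [doubleWord, lcpLen]
    | cons m y =>
      by_cases hnm : n = m
      · subst hnm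
        simp only [doubleWord, lcpLen, if_true, ih]
        ring
      · simp [doubleWord, lcpLen, hnm]

theorem doubleWord_append_singleton (c : List ℕ → ℕ → ℕ) (x : List ℕ) (n : ℕ) :
    doubleWord c (x ++ [n]) = doubleWord c x ++ [n, c (doubleWord c x) n] := by
  induction x generalizing c with
  | nil => rfl
  | cons m x ih => simp only [List.cons_append, doubleWord, ih]

/-- `doubleWord` as a map of trees, multiplying all distances by two. -/
def TreeOmega.double (c : List ℕ → ℕ → ℕ) {h : ℕ} (x : TreeOmega h) : TreeOmega (2 * h) :=
  ⟨doubleWord c x.1, (length_doubleWord c x.1).trans_le (Nat.mul_le_mul_left 2 x.2)⟩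

theorem tDist_double (c : List ℕ → ℕ → ℕ) {h : ℕ} (x y : TreeOmega h) :
    tDist (2 * h) (x.double c) (y.double c) = 2 * tDist h x y := by
  simp only [tDist, TreeOmega.double, treeDist, length_doubleWord, lcpLen_doubleWord]
  push_cast
  ring

theorem lipUB_comp_double {Y : Type*} [PseudoMetricSpace Y] {h : ℕ} {f : TreeOmega (2 * h) → Y}
    {c : List ℕ → ℕ → ℕ} {K : ℝ}
    (hf : ∀ (p q : TreeOmega (2 * h)) (n : ℕ),
      q.1 = p.1 ++ [n, c p.1 n] → dist (f p) (f q) ≤ K) :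
    LipUB (tDist h) dist (fun x => f (x.double c)) K := by
  refine lipUB_of_edges fun x y n hy => hf (x.double c) (y.double c) n ?_
  simp only [TreeOmega.double, hy, doubleWord_append_singleton]

theorem coLipUB_comp_double {β : Type*} {dβ : β → β → ℝ} {h : ℕ} {f : TreeOmega (2 * h) → β}
    {C : ℝ} (hf : CoLipUB (tDist (2 * h)) dβ f C) (c : List ℕ → ℕ → ℕ) :
    CoLipUB (tDist h) dβ (fun x => f (x.double c)) (C / 2) := by
  intro x y
  have hxy := hf (x.double c) (y.double c)
  rw [tDist_double] at hxy
  linarith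

section Rolewicz

variable {Y : Type*} [SeminormedAddCommGroup Y] {t r : ℝ}

theorem bddAbove_rolewiczSet : BddAbove (rolewiczSet Y t) := by
  refine ⟨1, ?_⟩
  rintro _ ⟨x, hx, y, hy, -, rfl⟩
  have hbdd : BddBelow (range fun i => ‖x - y i‖ / 2) :=
    ⟨0, forall_mem_range.2 fun i => by positivity⟩
  calc ⨅ i, ‖x - y i‖ / 2 ≤ ‖x - y 0‖ / 2 := ciInf_le hbdd 0
    _ ≤ (‖x‖ + ‖y 0‖) / 2 := by gcongr; exact norm_sub_le _ _
    _ ≤ 1 := by linarith [hy 0]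

theorem rolewiczMod_le_one : rolewiczMod Y t ≤ 1 := by
  refine sub_le_self _ (Real.sSup_nonneg ?_)
  rintro _ ⟨x, -, y, -, -, rfl⟩
  exact Real.iInf_nonneg fun i => by positivity

theorem exists_norm_sub_lt_of_separated (hr : 1 - rolewiczMod Y t < r) {x : Y} {y : ℕ → Y}
    (hx : ‖x‖ ≤ 1) (hy : ∀ i, ‖y i‖ ≤ 1) (hsep : ∀ i j, i ≠ j → t ≤ ‖y i - y j‖) :
    ∃ i, ‖x - y i‖ < 2 * r := by
  have hle : ⨅ i, ‖x - y i‖ / 2 ≤ sSup (rolewiczSet Y t) :=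
    le_csSup bddAbove_rolewiczSet ⟨x, hx, y, hy, hsep, rfl⟩
  rw [rolewiczMod, sub_sub_cancel] at hr
  obtain ⟨i, hi⟩ := exists_lt_of_ciInf_lt (hle.trans_lt hr)
  exact ⟨i, by linarith⟩

theorem exists_dist_lt_of_separated [NormedSpace ℝ Y] (hr : 1 - rolewiczMod Y t < r) {L : ℝ}
    (hL : 0 < L) {x m : Y} {y : ℕ → Y} (hx : dist x m ≤ L) (hy : ∀ i, dist (y i) m ≤ L)
    (hsep : ∀ i j, i ≠ j → L * t ≤ dist (y i) (y j)) :
    ∃ i, dist x (y i) < 2 * L * r := by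
  have norm_rescale (a b : Y) : ‖L⁻¹ • (a - m) - L⁻¹ • (b - m)‖ = L⁻¹ * dist a b := by
    rw [← dist_eq_norm, dist_smul₀, dist_sub_right, Real.norm_of_nonneg (inv_nonneg.2 hL.le)]
  have norm_rescale_le_one (a : Y) (ha : dist a m ≤ L) : ‖L⁻¹ • (a - m)‖ ≤ 1 := by
    have := norm_rescale a m
    rw [sub_self, smul_zero, sub_zero] at this
    rwa [this, inv_mul_le_iff₀ hL, mul_one]
  obtain ⟨i, hi⟩ := exists_norm_sub_lt_of_separated hr (norm_rescale_le_one x hx)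
    (fun i => norm_rescale_le_one (y i) (hy i)) fun i j hij => by
      rw [norm_rescale, le_inv_mul_iff₀ hL]
      exact hsep i j hij
  rw [norm_rescale, inv_mul_lt_iff₀ hL] at hi
  exact ⟨i, by linarith⟩

end Rolewicz

section Embedding

variable {Y : Type*} [SeminormedAddCommGroup Y] {N : ℕ} {f : TreeOmega N → Y} {L C D r : ℝ}

theorem exists_grandchild_dist_lt [NormedSpace ℝ Y] (hLip : LipUB (tDist N) dist f L)
    (hCo : CoLipUB (tDist N) dist f C) (hLC : L * C ≤ D) (hr : 1 - rolewiczMod Y (2 / D) < r)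
    (l : List ℕ) (n : ℕ) (hl : l.length + 2 ≤ N) :
    ∃ i, ∀ p q : TreeOmega N, p.1 = l → q.1 = l ++ [n, i] → dist (f p) (f q) < 2 * L * r := by
  obtain ⟨hL, hC⟩ := pos_of_lipUB_of_coLipUB (by omega) hLip hCo
  have hD : 0 < D := (mul_pos hL hC).trans_le hLC
  let parent : TreeOmega N := ⟨l, by omega⟩
  let child : TreeOmega N := ⟨l ++ [n], by simpa using Nat.le_of_succ_le hl⟩
  let grandchild (i : ℕ) : TreeOmega N := ⟨l ++ [n, i], by simpa using hl⟩
  have hparent : tDist N parent child = 1 := treeDist_child l n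
  have hgrandchild (i : ℕ) : tDist N (grandchild i) child = 1 := treeDist_grandchild_child l n i
  have hsiblings (i j : ℕ) (hij : i ≠ j) : tDist N (grandchild i) (grandchild j) = 2 := by
    simpa [tDist, grandchild] using treeDist_siblings (l ++ [n]) hij
  obtain ⟨i, hi⟩ := exists_dist_lt_of_separated hr hL
    (by simpa [hparent] using hLip parent child)
    (fun i => by simpa [hgrandchild] using hLip (grandchild i) child)
    (fun i j hij => hsiblings i j hij ▸ hCo.mul_div_le_dist hL.le hD hLC _ _)
  refine ⟨i, fun p q hp hq => ?_⟩
  rwa [Subtype.ext hp (a2 := parent), Subtype.ext hq (a2 := grandchild i)]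

theorem exists_selector_dist_le [NormedSpace ℝ Y] (hLip : LipUB (tDist N) dist f L)
    (hCo : CoLipUB (tDist N) dist f C) (hLC : L * C ≤ D) (hr : 1 - rolewiczMod Y (2 / D) < r) :
    ∃ c : List ℕ → ℕ → ℕ, ∀ (p q : TreeOmega N) (n : ℕ),
      q.1 = p.1 ++ [n, c p.1 n] → dist (f p) (f q) ≤ 2 * L * r := by
  choose! c hc using exists_grandchild_dist_lt hLip hCo hLC hr
  refine ⟨c, fun p q n hq => (hc p.1 n ?_ p q rfl hq).le⟩
  simpa [hq] using q.2

end Embedding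

theorem cDist_le_mul_of_one_sub_rolewiczMod_lt
    {Y : Type*} [SeminormedAddCommGroup Y] [NormedSpace ℝ Y] {h : ℕ}
    {f : TreeOmega (2 * h) → Y} {L C D r : ℝ} (hLip : LipUB (tDist (2 * h)) dist f L)
    (hCo : CoLipUB (tDist (2 * h)) dist f C) (hLC : L * C ≤ D)
    (hr : 1 - rolewiczMod Y (2 / D) < r) :
    cDist (TreeOmega h) Y (tDist h) dist ≤ ENNReal.ofReal (D * r) := by
  obtain ⟨c, hc⟩ := exists_selector_dist_le hLip hCo hLC hr
  have hCo' := coLipUB_comp_double hCo c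
  have hinj := hCo'.injective fun x y hxy => Subtype.ext (eq_of_treeDist_nonpos hxy)
  have hr_nonneg : 0 ≤ r := (sub_nonneg.2 rolewiczMod_le_one).trans hr.le
  calc cDist (TreeOmega h) Y (tDist h) dist
      ≤ ENNReal.ofReal (2 * L * r * (C / 2)) :=
        cDist_le_of_lipUB_of_coLipUB hinj (lipUB_comp_double hc) hCo'
    _ = ENNReal.ofReal (L * C * r) := by ring_nf
    _ ≤ ENNReal.ofReal (D * r) := by gcongr

theorem tree_self_improvement_general
    {Y : Type*} [SeminormedAddCommGroup Y] [NormedSpace ℝ Y] {h : ℕ}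
    {f : TreeOmega (2 * h) → Y} {L C D : ℝ} (hLip : LipUB (tDist (2 * h)) dist f L)
    (hCo : CoLipUB (tDist (2 * h)) dist f C) (hLC : L * C ≤ D) :
    cDist (TreeOmega h) Y (tDist h) dist ≤ ENNReal.ofReal (D * (1 - rolewiczMod Y (2 / D))) := by
  have hcont : Continuous fun r : ℝ => ENNReal.ofReal (D * r) :=
    ENNReal.continuous_ofReal.comp (continuous_const_mul D)
  have hle : ∀ r ∈ Ioi (1 - rolewiczMod Y (2 / D)),
      cDist (TreeOmega h) Y (tDist h) dist ≤ ENNReal.ofReal (D * r) :=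
    fun _ hr => cDist_le_mul_of_one_sub_rolewiczMod_lt hLip hCo hLC hr
  exact ge_of_tendsto hcont.continuousWithinAt (eventually_mem_nhdsWithin.mono hle)

/-- Proposition 2.4: if a Banach space `Y` has property (β) and
`T^ω_{2^k}` embeds into `Y` with distortion at most `D`, then
`c_Y(T^ω_{2^{k-1}}) ≤ D (1 - β̄_Y(2/D))`. -/
theorem tree_self_improvement
    (Y : Type*) [NormedAddCommGroup Y] [NormedSpace ℝ Y] [CompleteSpace Y]
    (hY : HasBeta Y) (k : ℕ) (hk : 1 ≤ k) (D : ℝ) (hD : 1 ≤ D)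
    (hemb : ∃ (f : TreeOmega (2 ^ k) → Y) (L C : ℝ), Function.Injective f ∧
      LipUB (tDist (2 ^ k)) (fun a b : Y => dist a b) f L ∧
      CoLipUB (tDist (2 ^ k)) (fun a b : Y => dist a b) f C ∧ L * C ≤ D) :
    cDist (TreeOmega (2 ^ (k - 1))) Y (tDist (2 ^ (k - 1))) (fun a b : Y => dist a b) ≤
      ENNReal.ofReal (D * (1 - rolewiczMod Y (2 / D))) := by
  rw [← mul_pow_sub_one (by omega) 2] at hemb
  obtain ⟨f, L, C, -, hLip, hCo, hLC⟩ := hemb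
  exact tree_self_improvement_general hLip hCo hLC

end
end

section
/- Let Y be a real Banach space admitting an equivalent norm with property (β). Then sup_{ℓ≥1} c_Y(P^ω_ℓ) = ∞. Moreover, if Y itself has property (β_p) with constant γ > 0 for some p ∈ (1,∞), then c_Y(P^ω_ℓ) ≥ 2·(2γ/3)^{1/p}·ℓ^{1/p} for every integer ℓ ≥ 1. -/
open Set Function Filter

open scoped ENNReal

attribute [local instance] Classical.propDecidable

noncomputable section

def rolewiczSetN {Y : Type*} [AddCommGroup Y] (N : Y → ℝ) (t : ℝ) : Set ℝ :=
  {s | ∃ x : Y, N x ≤ 1 ∧ ∃ y : ℕ → Y, (∀ i, N (y i) ≤ 1) ∧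
    (∀ n m : ℕ, n ≠ m → t ≤ N (y n - y m)) ∧ s = ⨅ i, N (x - y i) / 2}

def rolewiczModN {Y : Type*} [AddCommGroup Y] (N : Y → ℝ) (t : ℝ) : ℝ :=
  1 - sSup (rolewiczSetN N t)

def IsEquivNorm (Y : Type*) [SeminormedAddCommGroup Y] [NormedSpace ℝ Y] (N : Y → ℝ) : Prop :=
  (∀ x y : Y, N (x + y) ≤ N x + N y) ∧ (∀ (c : ℝ) (x : Y), N (c • x) = |c| * N x) ∧
  ∃ a b : ℝ, 0 < a ∧ a ≤ b ∧ ∀ y : Y, a * ‖y‖ ≤ N y ∧ N y ≤ b * ‖y‖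

def AdmitsBetaNorm (Y : Type*) [SeminormedAddCommGroup Y] [NormedSpace ℝ Y] : Prop :=
  ∃ N : Y → ℝ, IsEquivNorm Y N ∧ ∀ t : ℝ, 0 < t → t ≤ 2 → 0 < rolewiczModN N t

def AdmitsBetaPNorm (Y : Type*) [SeminormedAddCommGroup Y] [NormedSpace ℝ Y] (p γ : ℝ) : Prop :=
  ∃ N : Y → ℝ, IsEquivNorm Y N ∧
    ∀ t : ℝ, 0 < t → t ≤ 2 → (rolewiczSetN N t).Nonempty → γ * t ^ p ≤ rolewiczModN N t
inductive P1V : Type | r | b | s | t (i : ℕ)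

def parasolBase : Σ (Vt : Type) (Et : Type), Et → Vt × Vt :=
  ⟨P1V, Unit ⊕ ℕ ⊕ ℕ, fun e =>
    match e with
    | Sum.inl _ => (P1V.r, P1V.b)
    | Sum.inr (Sum.inl i) => (P1V.b, P1V.t i)
    | Sum.inr (Sum.inr i) => (P1V.t i, P1V.s)⟩

def parasolStep (d : Σ (Vt : Type) (Et : Type), Et → Vt × Vt) :
    Σ (Vt : Type) (Et : Type), Et → Vt × Vt :=
  ⟨d.1 ⊕ d.2.1 × (Unit ⊕ ℕ), d.2.1 × (Unit ⊕ ℕ ⊕ ℕ), fun e =>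
    match e with
    | (e, Sum.inl _) => (Sum.inl (d.2.2 e).1, Sum.inr (e, Sum.inl ()))
    | (e, Sum.inr (Sum.inl i)) => (Sum.inr (e, Sum.inl ()), Sum.inr (e, Sum.inr i))
    | (e, Sum.inr (Sum.inr i)) => (Sum.inr (e, Sum.inr i), Sum.inl (d.2.2 e).2)⟩

def parasolData : ℕ → Σ (Vt : Type) (Et : Type), Et → Vt × Vt
  | 0 => parasolBase
  | (n+1) => parasolStep (parasolData n)

def PVert (n : ℕ) : Type := (parasolData n).1

def parasolGraph (n : ℕ) : SimpleGraph (PVert n) :=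
  SimpleGraph.fromRel (fun x y => ∃ e, (parasolData n).2.2 e = (x, y))

def pGDist (n : ℕ) : PVert n → PVert n → ℝ :=
  fun x y => ((parasolGraph n).dist x y : ℝ)

/-!
Rescale an embedding of the level-`ℓ` parasol graph so that it does not contract distances; its
Lipschitz constant `D` is then its distortion. In each copy of `P^ω_1` the images of `r` and of the
tips `t_i`, seen from that of `b`, are points of norm at most `D`, and those of the tips are
`2`-separated, so the (β)-modulus at `2 / D` produces a tip closer to `r` than the `2 D` allowed by
the triangle inequality. Hence `r` and `s` are mapped to distance at most `D (3 - 2 β̄(2 / D))`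
although they are `3` apart in the graph: after division by `3`, the level-`(ℓ - 1)` graph embeds
without contraction and with the smaller constant `D - (2/3) D β̄(2 / D)`. The constant of a
noncontracting map is at least `1`, so if `D β̄(2 / D) ≥ δ` all along the descent, then
`(2/3) δ ℓ < D`.
-/

section Modulus

theorem rolewiczSetN_anti {Y : Type*} [AddCommGroup Y] (N : Y → ℝ) : Antitone (rolewiczSetN N) := by
  rintro t t' h _ ⟨x, hx, y, hy, hsep, rfl⟩
  exact ⟨x, hx, y, hy, fun n m hnm => h.trans (hsep n m hnm), rfl⟩

variable {Y : Type*} [AddCommGroup Y] [Module ℝ Y] {N : Seminorm ℝ Y}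

theorem bddAbove_rolewiczSetN (N : Seminorm ℝ Y) (t : ℝ) : BddAbove (rolewiczSetN N t) := by
  refine ⟨1, ?_⟩
  rintro _ ⟨x, hx, y, hy, -, rfl⟩
  have hbdd : BddBelow (range fun i => N (x - y i) / 2) :=
    ⟨0, by rintro _ ⟨i, rfl⟩; exact div_nonneg (apply_nonneg N _) zero_le_two⟩
  refine (ciInf_le hbdd 0).trans ?_
  linarith [map_sub_le_add N x (y 0), hy 0]

theorem rolewiczModN_le_rolewiczModN {t t' : ℝ} (h : t ≤ t')
    (hne : (rolewiczSetN N t').Nonempty) : rolewiczModN N t ≤ rolewiczModN N t' :=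
  sub_le_sub_left (csSup_le_csSup (bddAbove_rolewiczSetN N t) hne (rolewiczSetN_anti N h)) 1

theorem iInf_div_mem_rolewiczSetN {D t : ℝ} (hD : 0 < D) {x : Y} {y : ℕ → Y} (hx : N x ≤ D)
    (hy : ∀ i, N (y i) ≤ D) (hsep : ∀ i j, i ≠ j → t * D ≤ N (y i - y j)) :
    (⨅ i, N (x - y i)) / (2 * D) ∈ rolewiczSetN N t := by
  have hsmul (z : Y) : N (D⁻¹ • z) = N z / D := by
    rw [map_smul_eq_mul, Real.norm_of_nonneg (inv_nonneg.2 hD.le), inv_mul_eq_div]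
  refine ⟨D⁻¹ • x, ?_, fun i => D⁻¹ • y i, fun i => ?_, fun i j hij => ?_, ?_⟩
  · rw [hsmul]
    exact div_le_one_of_le₀ hx hD.le
  · rw [hsmul]
    exact div_le_one_of_le₀ (hy i) hD.le
  · rw [← smul_sub, hsmul, le_div_iff₀ hD]
    exact hsep i j hij
  · simp only [← smul_sub, hsmul, div_div, mul_comm D 2]
    simp only [div_eq_mul_inv]
    exact Real.iInf_mul_of_nonneg (by positivity) _

theorem iInf_le_mul_one_sub_rolewiczModN {D t : ℝ} (hD : 0 < D) {x : Y} {y : ℕ → Y}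
    (hx : N x ≤ D) (hy : ∀ i, N (y i) ≤ D) (hsep : ∀ i j, i ≠ j → t * D ≤ N (y i - y j)) :
    ⨅ i, N (x - y i) ≤ 2 * D * (1 - rolewiczModN N t) := by
  rw [rolewiczModN, sub_sub_cancel, mul_comm, ← div_le_iff₀ (by positivity)]
  exact le_csSup (bddAbove_rolewiczSetN N t) (iInf_div_mem_rolewiczSetN hD hx hy hsep)

theorem map_sub_le_of_parasol {D t : ℝ} (hD : 0 < D) {r b s : Y} {T : ℕ → Y}
    (hrb : N (r - b) ≤ D) (hT : ∀ i, N (T i - b) ≤ D) (hTs : ∀ i, N (T i - s) ≤ D)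
    (hsep : ∀ i j, i ≠ j → t * D ≤ N (T i - T j)) :
    (rolewiczSetN N t).Nonempty ∧ N (r - s) ≤ D * (3 - 2 * rolewiczModN N t) := by
  have hsep' : ∀ i j, i ≠ j → t * D ≤ N (T i - b - (T j - b)) := by
    simpa only [sub_sub_sub_cancel_right] using hsep
  refine ⟨⟨_, iInf_div_mem_rolewiczSetN hD hrb hT hsep'⟩, ?_⟩
  have hclose := iInf_le_mul_one_sub_rolewiczModN hD hrb hT hsep'
  simp only [sub_sub_sub_cancel_right] at hclose
  have hfar : N (r - s) - D ≤ ⨅ i, N (r - T i) := le_ciInf fun i => by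
    linarith [le_map_sub_add_map_sub N r (T i) s, hTs i]
  linarith

end Modulus

section GraphDistance

variable {V V' : Type*} {G : SimpleGraph V} {G' : SimpleGraph V'}

theorem sub_le_dist_of_forall_adj {φ : V → ℝ} (hφ : ∀ x y, G.Adj x y → |φ x - φ y| ≤ 1) {u v : V}
    (huv : G.Reachable u v) : φ v - φ u ≤ G.dist u v := by
  have hwalk {x y : V} (w : G.Walk x y) : φ y - φ x ≤ w.length := by
    induction w with
    | nil => simp
    | cons h _ ih =>
      rw [SimpleGraph.Walk.length_cons, Nat.cast_succ]
      linarith [neg_le_of_abs_le (hφ _ _ h)]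
  obtain ⟨w, hw⟩ := huv.exists_walk_length_eq_dist
  exact hw ▸ hwalk w

theorem abs_dist_sub_dist_le_one (u : V) {x y : V} (h : G.Adj x y) :
    |(G.dist u x : ℝ) - G.dist u y| ≤ 1 := by
  rw [abs_sub_le_iff, sub_le_iff_le_add, sub_le_iff_le_add]
  norm_cast
  have := h.diff_dist_adj (u := u)
  omega

theorem dist_map_le_of_reachable (φ : G →g G') {u v : V} (h : G.Reachable u v) :
    G'.dist (φ u) (φ v) ≤ G.dist u v := by
  obtain ⟨w, hw⟩ := h.exists_walk_length_eq_dist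
  simpa [← hw] using SimpleGraph.dist_le (w.map φ)

theorem dist_map_iso (φ : G ≃g G') (u v : V) : G'.dist (φ u) (φ v) = G.dist u v := by
  by_cases h : G.Reachable u v
  · refine (dist_map_le_of_reachable φ.toHom h).antisymm ?_
    simpa using dist_map_le_of_reachable φ.symm.toHom (φ.reachable_iff.2 h)
  · rw [SimpleGraph.dist_eq_zero_of_not_reachable h,
      SimpleGraph.dist_eq_zero_of_not_reachable (mt φ.reachable_iff.1 h)]

end GraphDistance

/-- A directed multigraph: types of vertices and of edges, and the source and target of each edge.
This is the data from which the parasol graphs are built. -/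
abbrev EdgeData := Σ (V : Type) (E : Type), E → V × V

namespace EdgeData

/-- The source of an edge. -/
abbrev src (d : EdgeData) (e : d.2.1) : d.1 := (d.2.2 e).1

/-- The target of an edge. -/
abbrev tgt (d : EdgeData) (e : d.2.1) : d.1 := (d.2.2 e).2

/-- The simple graph underlying a directed multigraph; loops are discarded. -/
def graph (d : EdgeData) : SimpleGraph d.1 :=
  SimpleGraph.fromRel fun x y => ∃ e, d.2.2 e = (x, y)

/-- A vertex of `d`, regarded as a vertex of the parasol refinement of `d`. -/
abbrev old (d : EdgeData) (v : d.1) : (parasolStep d).1 := Sum.inl v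

/-- The vertex `b` of the copy of `P^ω_1` that replaces the edge `e`. -/
abbrev hub (d : EdgeData) (e : d.2.1) : (parasolStep d).1 := Sum.inr (e, Sum.inl ())

/-- The vertex `t_i` of the copy of `P^ω_1` that replaces the edge `e`. -/
abbrev tip (d : EdgeData) (e : d.2.1) (i : ℕ) : (parasolStep d).1 := Sum.inr (e, Sum.inr i)

variable {d : EdgeData}

theorem exists_edge_of_adj {x y : d.1} (h : d.graph.Adj x y) :
    ∃ e, d.src e = x ∧ d.tgt e = y ∨ d.src e = y ∧ d.tgt e = x := by
  obtain ⟨-, ⟨e, he⟩ | ⟨e, he⟩⟩ := (SimpleGraph.fromRel_adj _ _ _).1 h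
  · exact ⟨e, by simp [src, tgt, he]⟩
  · exact ⟨e, by simp [src, tgt, he]⟩

theorem adj_src_tgt {e : d.2.1} (h : d.src e ≠ d.tgt e) : d.graph.Adj (d.src e) (d.tgt e) :=
  (SimpleGraph.fromRel_adj _ _ _).2 ⟨h, Or.inl ⟨e, rfl⟩⟩

theorem forall_adj_abs_sub_le_one_iff {φ : d.1 → ℝ} :
    (∀ x y, d.graph.Adj x y → |φ x - φ y| ≤ 1) ↔ ∀ e, |φ (d.src e) - φ (d.tgt e)| ≤ 1 := by
  refine ⟨fun h e => ?_, fun h x y hxy => ?_⟩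
  · by_cases hloop : d.src e = d.tgt e
    · simp [hloop]
    · exact h _ _ (adj_src_tgt hloop)
  · obtain ⟨e, ⟨rfl, rfl⟩ | ⟨rfl, rfl⟩⟩ := exists_edge_of_adj hxy
    · exact h e
    · exact abs_sub_comm (φ (d.src e)) _ ▸ h e

/-- The graph isomorphism induced by an isomorphism of directed multigraphs. -/
def graphIso {d d' : EdgeData} (φ : d.1 ≃ d'.1) (ψ : d.2.1 ≃ d'.2.1)
    (h : ∀ e, d'.2.2 (ψ e) = Prod.map φ φ (d.2.2 e)) : d.graph ≃g d'.graph where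
  toEquiv := φ
  map_rel_iff' {x y} := by
    have hedge (x y : d.1) : (∃ e, d'.2.2 e = (φ x, φ y)) ↔ ∃ e, d.2.2 e = (x, y) := by
      simp [← ψ.exists_congr_right, h, Prod.ext_iff]
    simp [graph, hedge]

theorem adj_old_src_hub (d : EdgeData) (e : d.2.1) :
    (graph (parasolStep d)).Adj (d.old (d.src e)) (d.hub e) :=
  adj_src_tgt (d := parasolStep d) (e := (e, Sum.inl ())) Sum.inl_ne_inr

theorem adj_hub_tip (d : EdgeData) (e : d.2.1) (i : ℕ) :
    (graph (parasolStep d)).Adj (d.hub e) (d.tip e i) :=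
  adj_src_tgt (d := parasolStep d) (e := (e, Sum.inr (Sum.inl i)))
    fun h => Sum.inl_ne_inr (Prod.mk.inj (Sum.inr.inj h)).2

theorem adj_tip_old_tgt (d : EdgeData) (e : d.2.1) (i : ℕ) :
    (graph (parasolStep d)).Adj (d.tip e i) (d.old (d.tgt e)) :=
  adj_src_tgt (d := parasolStep d) (e := (e, Sum.inr (Sum.inr i))) Sum.inr_ne_inl

theorem reachable_old_of_reachable {u v : d.1} (h : d.graph.Reachable u v) :
    (graph (parasolStep d)).Reachable (d.old u) (d.old v) := by
  have hedge (e : d.2.1) :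
      (graph (parasolStep d)).Reachable (d.old (d.src e)) (d.old (d.tgt e)) :=
    (adj_old_src_hub d e).reachable.trans <|
      (adj_hub_tip d e 0).reachable.trans (adj_tip_old_tgt d e 0).reachable
  obtain ⟨w⟩ := h
  induction w with
  | nil => exact .rfl
  | cons hadj _ ih =>
    obtain ⟨e, ⟨rfl, rfl⟩ | ⟨rfl, rfl⟩⟩ := exists_edge_of_adj hadj
    · exact (hedge e).trans ih
    · exact (hedge e).symm.trans ih

/-- The affine interpolation of a potential on `d` along the three thirds of each refined edge. -/
def trisect (ρ : d.1 → ℝ) : (parasolStep d).1 → ℝ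
  | Sum.inl v => 3 * ρ v
  | Sum.inr (e, Sum.inl _) => 2 * ρ (d.src e) + ρ (d.tgt e)
  | Sum.inr (e, Sum.inr _) => ρ (d.src e) + 2 * ρ (d.tgt e)

theorem trisect_src_sub_trisect_tgt (ρ : d.1 → ℝ) (e : d.2.1) (k : Unit ⊕ ℕ ⊕ ℕ) :
    trisect ρ (src (parasolStep d) (e, k)) - trisect ρ (tgt (parasolStep d) (e, k)) =
      ρ (d.src e) - ρ (d.tgt e) := by
  rcases k with _ | _ | _ <;> simp only [parasolStep, trisect] <;> ring

theorem three_mul_dist_le_dist_old (u v : d.1) :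
    3 * (d.graph.dist u v : ℝ) ≤ (graph (parasolStep d)).dist (d.old u) (d.old v) := by
  by_cases huv : d.graph.Reachable u v
  · have hρ := forall_adj_abs_sub_le_one_iff.1 fun _ _ => abs_dist_sub_dist_le_one (G := d.graph) u
    have hφ : ∀ x y, (graph (parasolStep d)).Adj x y →
        |trisect (fun z => (d.graph.dist u z : ℝ)) x - trisect (fun z => ↑(d.graph.dist u z)) y|
          ≤ 1 :=
      forall_adj_abs_sub_le_one_iff.2 fun ⟨e, k⟩ => by
        rw [trisect_src_sub_trisect_tgt]
        exact hρ e
    simpa [trisect] using sub_le_dist_of_forall_adj hφ (reachable_old_of_reachable huv)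
  · simp [SimpleGraph.dist_eq_zero_of_not_reachable huv]

theorem two_le_dist_tip (d : EdgeData) (e : d.2.1) {i j : ℕ} (hij : i ≠ j) :
    2 ≤ (graph (parasolStep d)).dist (d.tip e i) (d.tip e j) := by
  have hreach : (graph (parasolStep d)).Reachable (d.tip e i) (d.tip e j) :=
    (adj_hub_tip d e i).symm.reachable.trans (adj_hub_tip d e j).reachable
  refine hreach.one_lt_dist_of_ne_of_not_adj
    (fun h => hij (Sum.inr.inj (Prod.mk.inj (Sum.inr.inj h)).2)) fun hadj => ?_
  obtain ⟨⟨_, _ | _ | _⟩, ⟨⟨⟩, ⟨⟩⟩ | ⟨⟨⟩, ⟨⟩⟩⟩ := exists_edge_of_adj hadj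

/-- The edge data of the level-`0` parasol graph. -/
def singleEdge : EdgeData := ⟨Bool, Unit, fun _ => (false, true)⟩

theorem adj_singleEdge : singleEdge.graph.Adj false true :=
  adj_src_tgt (d := singleEdge) (e := ()) Bool.false_ne_true

/-- The level-`1` parasol graph refines the level-`0` one, although `parasolBase` is not literally
of the form `parasolStep _`. -/
def parasolStepSingleEdgeIso : graph (parasolStep singleEdge) ≃g graph parasolBase :=
  graphIso (d := parasolStep singleEdge) (d' := parasolBase)
    { toFun
        | Sum.inl false => P1V.r
        | Sum.inl true => P1V.s
        | Sum.inr (_, Sum.inl _) => P1V.b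
        | Sum.inr (_, Sum.inr i) => P1V.t i
      invFun
        | P1V.r => singleEdge.old false
        | P1V.s => singleEdge.old true
        | P1V.b => singleEdge.hub ()
        | P1V.t i => singleEdge.tip () i
      left_inv := by rintro ((_ | _) | ⟨_, _ | _⟩) <;> rfl
      right_inv := by rintro (_ | _ | _ | _) <;> rfl }
    (Equiv.punitProd _)
    (by rintro ⟨_, _ | _ | _⟩ <;> rfl)

end EdgeData

theorem exists_parasolGraph_adj : ∀ n, ∃ u v, (parasolGraph n).Adj u v
  | 0 => ⟨P1V.r, P1V.b, EdgeData.adj_src_tgt (d := parasolBase) (e := Sum.inl ()) P1V.noConfusion⟩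
  | n + 1 =>
    let ⟨_, _, h⟩ := exists_parasolGraph_adj n
    let ⟨e, _⟩ := EdgeData.exists_edge_of_adj h
    ⟨_, _, EdgeData.adj_old_src_hub _ e⟩

/-- `f` is an embedding of the graph `G`, with its path metric, that does not contract distances
measured by `N`, and `D` is a Lipschitz constant for it along the edges of `G`. -/
structure NoncontractingWith {V Y : Type*} [AddCommGroup Y] [Module ℝ Y] (N : Seminorm ℝ Y)
    (G : SimpleGraph V) (D : ℝ) (f : V → Y) : Prop where
  map_sub_le {u v : V} : G.Adj u v → N (f u - f v) ≤ D
  dist_le (u v : V) : G.dist u v ≤ N (f u - f v)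

namespace NoncontractingWith

section

variable {V V' Y : Type*} [AddCommGroup Y] [Module ℝ Y] {N N' : Seminorm ℝ Y}
  {G : SimpleGraph V} {G' : SimpleGraph V'} {D : ℝ} {f : V → Y}

theorem one_le (hf : NoncontractingWith N G D f) {u v : V} (h : G.Adj u v) : 1 ≤ D := by
  simpa [SimpleGraph.dist_eq_one_iff_adj.2 h] using (hf.dist_le u v).trans (hf.map_sub_le h)

theorem comp_iso (hf : NoncontractingWith N G D f) (φ : G' ≃g G) :
    NoncontractingWith N G' D (f ∘ φ) where
  map_sub_le h := hf.map_sub_le (φ.map_adj_iff.2 h)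
  dist_le u v := dist_map_iso φ u v ▸ hf.dist_le (φ u) (φ v)

theorem of_equivalent (hf : NoncontractingWith N G D f) {a b : ℝ} (ha : 0 < a) (hb : 0 ≤ b)
    (hN : ∀ y, a * N y ≤ N' y ∧ N' y ≤ b * N y) :
    NoncontractingWith N' G (b / a * D) (fun v => a⁻¹ • f v) := by
  have hscale (u v : V) : N' (a⁻¹ • f u - a⁻¹ • f v) = N' (f u - f v) / a := by
    rw [← smul_sub, map_smul_eq_mul, Real.norm_of_nonneg (inv_nonneg.2 ha.le), inv_mul_eq_div]
  refine ⟨fun {u v} h => ?_, fun u v => ?_⟩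
  · rw [hscale, div_mul_eq_mul_div]
    gcongr
    exact (hN _).2.trans (mul_le_mul_of_nonneg_left (hf.map_sub_le h) hb)
  · rw [hscale, le_div_iff₀' ha]
    exact (mul_le_mul_of_nonneg_left (hf.dist_le u v) ha.le).trans (hN _).1

end

section

variable {Y : Type*} [AddCommGroup Y] [Module ℝ Y] {N : Seminorm ℝ Y}

theorem map_old_src_sub_old_tgt_le {d : EdgeData} {D δ : ℝ} {f : (parasolStep d).1 → Y}
    (hf : NoncontractingWith N (EdgeData.graph (parasolStep d)) D f)
    (hδ : (rolewiczSetN N (2 / D)).Nonempty → δ ≤ D * rolewiczModN N (2 / D)) (e : d.2.1) :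
    N (f (d.old (d.src e)) - f (d.old (d.tgt e))) ≤ 3 * D - 2 * δ := by
  have hD : 0 < D := zero_lt_one.trans_le (hf.one_le (d.adj_old_src_hub e))
  have hsep (i j : ℕ) (hij : i ≠ j) : 2 / D * D ≤ N (f (d.tip e i) - f (d.tip e j)) := by
    rw [div_mul_cancel₀ _ hD.ne']
    exact le_trans (mod_cast d.two_le_dist_tip e hij) (hf.dist_le _ _)
  obtain ⟨hne, hle⟩ := map_sub_le_of_parasol hD (hf.map_sub_le (d.adj_old_src_hub e))
    (fun i => hf.map_sub_le (d.adj_hub_tip e i).symm)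
    (fun i => hf.map_sub_le (d.adj_tip_old_tgt e i)) hsep
  linarith [hδ hne]

theorem of_parasolStep {d : EdgeData} {D δ : ℝ} {f : (parasolStep d).1 → Y}
    (hf : NoncontractingWith N (EdgeData.graph (parasolStep d)) D f)
    (hδ : (rolewiczSetN N (2 / D)).Nonempty → δ ≤ D * rolewiczModN N (2 / D)) :
    NoncontractingWith N d.graph (D - 2 / 3 * δ) (fun v => (3 : ℝ)⁻¹ • f (d.old v)) := by
  have hscale (x y : Y) : N ((3 : ℝ)⁻¹ • x - (3 : ℝ)⁻¹ • y) = N (x - y) / 3 := by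
    rw [← smul_sub, map_smul_eq_mul, Real.norm_of_nonneg (by norm_num), inv_mul_eq_div]
  refine ⟨fun {u v} h => ?_, fun u v => ?_⟩
  · rw [hscale]
    obtain ⟨e, ⟨rfl, rfl⟩ | ⟨rfl, rfl⟩⟩ := EdgeData.exists_edge_of_adj h
    · linarith [hf.map_old_src_sub_old_tgt_le hδ e]
    · linarith [hf.map_old_src_sub_old_tgt_le hδ e, map_sub_rev N (f (d.old (d.src e)))
        (f (d.old (d.tgt e)))]
  · rw [hscale]
    linarith [EdgeData.three_mul_dist_le_dist_old u v, hf.dist_le (d.old u) (d.old v)]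

theorem one_le_of_parasolGraph {n : ℕ} {D : ℝ} {f : PVert n → Y}
    (hf : NoncontractingWith N (parasolGraph n) D f) : 1 ≤ D :=
  let ⟨_, _, h⟩ := exists_parasolGraph_adj n
  hf.one_le h

theorem succ_level_mul_lt {K δ : ℝ} (hδ₀ : 0 ≤ δ)
    (hδ : ∀ D, 1 ≤ D → D ≤ K → (rolewiczSetN N (2 / D)).Nonempty →
      δ ≤ D * rolewiczModN N (2 / D)) {n : ℕ} {D : ℝ} {f : PVert n → Y}
    (hf : NoncontractingWith N (parasolGraph n) D f) (hD : D ≤ K) :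
    (n + 1) * (2 / 3 * δ) < D := by
  induction n generalizing D with
  | zero =>
    have hf₀ := (hf.comp_iso EdgeData.parasolStepSingleEdgeIso).of_parasolStep
      (hδ D hf.one_le_of_parasolGraph hD)
    have := hf₀.one_le EdgeData.adj_singleEdge
    norm_num
    linarith
  | succ n ih =>
    have := ih (hf.of_parasolStep (hδ D hf.one_le_of_parasolGraph hD)) (by linarith)
    push_cast
    linarith

end

end NoncontractingWith

theorem antitoneOn_mul_div_rpow {c p : ℝ} (hc : 0 < c) (hp : 1 ≤ p) :
    AntitoneOn (fun x : ℝ => x * (c / x) ^ p) (Ioi 0) := by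
  intro x (hx : 0 < x) y (hy : 0 < y) hxy
  have hfactor {z : ℝ} (hz : 0 < z) : z * (c / z) ^ p = c * (c / z) ^ (p - 1) := by
    rw [Real.rpow_sub_one (by positivity)]
    field_simp
  simp only [hfactor hx, hfactor hy]
  gcongr

theorem mul_rpow_one_div_le_of_mul_div_rpow_le_one {a c p x : ℝ} (ha : 0 ≤ a) (hc : 0 < c)
    (hp : 0 < p) (hx : 0 < x) (h : a * (c / x) ^ p ≤ 1) : c * a ^ (1 / p) ≤ x := by
  have hpow : a ≤ (x / c) ^ p := by
    rwa [← inv_div, Real.inv_rpow (by positivity), ← div_eq_mul_inv,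
      div_le_one (by positivity)] at h
  rw [one_div, ← le_div_iff₀' hc]
  exact (Real.rpow_inv_le_iff_of_pos ha (by positivity) hp).2 hpow

section Distortion

variable {Y : Type*} [SeminormedAddCommGroup Y] [NormedSpace ℝ Y]

theorem exists_noncontractingWith_of_mem_distortionSet {V : Type*} {G : SimpleGraph V}
    (hG : ∃ u v, G.Adj u v) {D : ℝ}
    (hD : D ∈ distortionSet V Y (fun u v => (G.dist u v : ℝ)) (fun a b => dist a b)) :
    ∃ f, NoncontractingWith (normSeminorm ℝ Y) G D f := by
  obtain ⟨f, -, L, C, hL, hC, rfl⟩ := hD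
  obtain ⟨u₀, v₀, h₀⟩ := hG
  have hC₀ : 0 < C := by
    refine pos_of_mul_pos_left (zero_lt_one.trans_le ?_) (dist_nonneg (x := f u₀) (y := f v₀))
    simpa [SimpleGraph.dist_eq_one_iff_adj.2 h₀] using hC u₀ v₀
  have hscale (u v : V) : normSeminorm ℝ Y (C • f u - C • f v) = C * dist (f u) (f v) := by
    rw [← smul_sub, map_smul_eq_mul, Real.norm_of_nonneg hC₀.le, coe_normSeminorm, dist_eq_norm]
  refine ⟨fun v => C • f v, fun {u v} h => ?_, fun u v => ?_⟩
  · rw [hscale, mul_comm L]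
    gcongr
    simpa [SimpleGraph.dist_eq_one_iff_adj.2 h] using hL u v
  · rw [hscale]
    exact hC u v

theorem ofReal_le_cDist_of_forall_noncontractingWith {V : Type*} {G : SimpleGraph V}
    (hG : ∃ u v, G.Adj u v) {M : ℝ}
    (h : ∀ D f, NoncontractingWith (normSeminorm ℝ Y) G D f → M ≤ D) :
    ENNReal.ofReal M ≤ cDist V Y (fun u v => (G.dist u v : ℝ)) (fun a b => dist a b) := by
  refine le_iInf₂ fun D hD => ENNReal.ofReal_le_ofReal ?_
  obtain ⟨f, hf⟩ := exists_noncontractingWith_of_mem_distortionSet hG hD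
  exact h D f hf

theorem AdmitsBetaNorm.exists_ofReal_le_cDist_parasol (hY : AdmitsBetaNorm Y) (M : ℝ) :
    ∃ n, ENNReal.ofReal M ≤ cDist (PVert n) Y (pGDist n) (fun a b : Y => dist a b) := by
  obtain ⟨N₀, ⟨htri, hsmul, a, b, ha, hab, hN⟩, hβ⟩ := hY
  let N : Seminorm ℝ Y := Seminorm.of N₀ htri hsmul
  set K : ℝ := max 1 (b / a * M)
  have hK : 1 ≤ K := le_max_left _ _
  have hδ₀ : 0 < rolewiczModN N (2 / K) := hβ _ (by positivity) (div_le_self zero_le_two hK)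
  have hδ (D : ℝ) (hD : 1 ≤ D) (hDK : D ≤ K) (hne : (rolewiczSetN N (2 / D)).Nonempty) :
      rolewiczModN N (2 / K) ≤ D * rolewiczModN N (2 / D) := by
    have hmod : rolewiczModN N (2 / K) ≤ rolewiczModN N (2 / D) :=
      rolewiczModN_le_rolewiczModN (by gcongr) hne
    exact hmod.trans (le_mul_of_one_le_left (hδ₀.le.trans hmod) hD)
  obtain ⟨n, hn⟩ := exists_nat_gt (K / (2 / 3 * rolewiczModN N (2 / K)))
  rw [div_lt_iff₀ (by positivity)] at hn
  refine ⟨n, ofReal_le_cDist_of_forall_noncontractingWith (exists_parasolGraph_adj n)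
    fun D f hf => le_of_not_gt fun hDM => ?_⟩
  have hb : 0 ≤ b := (ha.trans_le hab).le
  have hDK : b / a * D ≤ K := (by gcongr : b / a * D ≤ b / a * M).trans (le_max_right _ _)
  have := (hf.of_equivalent (N' := N) ha hb hN).succ_level_mul_lt hδ₀.le hδ hDK
  linarith

theorem HasBetaP.ofReal_le_cDist_parasol {p γ : ℝ} (hp : 1 ≤ p) (hγ : 0 < γ)
    (hY : HasBetaP Y p γ) (n : ℕ) :
    ENNReal.ofReal (2 * (2 * γ / 3) ^ (1 / p) * ((n + 1 : ℕ) : ℝ) ^ (1 / p)) ≤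
      cDist (PVert n) Y (pGDist n) (fun a b : Y => dist a b) := by
  refine ofReal_le_cDist_of_forall_noncontractingWith (exists_parasolGraph_adj n) fun K f hf => ?_
  have hK : 0 < K := zero_lt_one.trans_le hf.one_le_of_parasolGraph
  have hδ (D : ℝ) (hD : 1 ≤ D) (hDK : D ≤ K)
      (hne : (rolewiczSetN (normSeminorm ℝ Y) (2 / D)).Nonempty) :
      γ * (K * (2 / K) ^ p) ≤ D * rolewiczModN (normSeminorm ℝ Y) (2 / D) := by
    have hD₀ : 0 < D := by positivity
    calc γ * (K * (2 / K) ^ p) ≤ γ * (D * (2 / D) ^ p) := by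
          exact mul_le_mul_of_nonneg_left (antitoneOn_mul_div_rpow two_pos hp hD₀ hK hDK) hγ.le
      _ = D * (γ * (2 / D) ^ p) := by ring
      _ ≤ D * rolewiczModN (normSeminorm ℝ Y) (2 / D) := by
          gcongr
          exact hY _ (by positivity) (div_le_self zero_le_two hD) hne
  have hlevel := hf.succ_level_mul_lt (by positivity) hδ le_rfl
  rw [mul_assoc, ← Real.mul_rpow (by positivity) (by positivity)]
  refine mul_rpow_one_div_le_of_mul_div_rpow_le_one (by positivity) two_pos (by positivity) hK ?_
  refine le_of_mul_le_mul_right ?_ hK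
  push_cast
  linarith

end Distortion

theorem parasol_distortion_lower_bound_general
    (Y : Type*) [SeminormedAddCommGroup Y] [NormedSpace ℝ Y] :
    (AdmitsBetaNorm Y → ∀ M : ℝ, ∃ l : ℕ, 1 ≤ l ∧
      ENNReal.ofReal M < cDist (PVert (l - 1)) Y (pGDist (l - 1)) (fun a b : Y => dist a b)) ∧
    (∀ p γ : ℝ, 1 ≤ p → 0 < γ → HasBetaP Y p γ → ∀ l : ℕ, 1 ≤ l →
      ENNReal.ofReal (2 * (2 * γ / 3) ^ (1 / p) * (l : ℝ) ^ (1 / p)) ≤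
        cDist (PVert (l - 1)) Y (pGDist (l - 1)) (fun a b : Y => dist a b)) := by
  refine ⟨fun hY M => ?_, fun p γ hp hγ hY l hl => ?_⟩
  · obtain ⟨n, hn⟩ := hY.exists_ofReal_le_cDist_parasol (max M 0 + 1)
    have hM : ENNReal.ofReal M < ENNReal.ofReal (max M 0 + 1) :=
      (ENNReal.ofReal_lt_ofReal_iff (by positivity)).2 ((le_max_left M 0).trans_lt (lt_add_one _))
    exact ⟨n + 1, n.succ_pos, hM.trans_le hn⟩
  · obtain ⟨n, rfl⟩ := Nat.exists_eq_add_of_le' hl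
    exact hY.ofReal_le_cDist_parasol hp hγ n

/-- Theorem 2.8: if `Y` admits an equivalent norm with property (β)
then `sup_{ℓ ≥ 1} c_Y(P^ω_ℓ) = ∞`; moreover if `Y` itself has property (β_p) with
constant `γ` then `c_Y(P^ω_ℓ) ≥ 2 (2γ/3)^{1/p} ℓ^{1/p}` for every `ℓ ≥ 1`. -/
theorem parasol_distortion_lower_bound
    (Y : Type*) [NormedAddCommGroup Y] [NormedSpace ℝ Y] [CompleteSpace Y]
    (hY : AdmitsBetaNorm Y) :
    (∀ M : ℝ, 0 < M → ∃ l : ℕ, 1 ≤ l ∧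
      ENNReal.ofReal M < cDist (PVert (l - 1)) Y (pGDist (l - 1)) (fun a b : Y => dist a b)) ∧
    (∀ p γ : ℝ, 1 < p → 0 < γ → HasBetaP Y p γ → ∀ l : ℕ, 1 ≤ l →
      ENNReal.ofReal (2 * (2 * γ / 3) ^ (1 / p) * (l : ℝ) ^ (1 / p)) ≤
        cDist (PVert (l - 1)) Y (pGDist (l - 1)) (fun a b : Y => dist a b)) :=
  ⟨fun M _ => (parasol_distortion_lower_bound_general Y).1 hY M,
    fun p γ hp => (parasol_distortion_lower_bound_general Y).2 p γ hp.le⟩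

end
end
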